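/- The running infimum p-value is valid at arbitrary random times: for any ℕ-valued random variable N (not necessarily a stopping time) and every a ∈ [0,1], sup_{θ*∈Θ_0} Pr_{θ*}(P̃_N ≤ a) ≤ a, where P̃_n = min_{s ≤ n} P_s and P_s = 1/M_{α,β,s} (taken to be +∞ when M_{α,β,s} = 0). -/

import Mathlib

open MeasureTheory ENNReal
open scoped BigOperators Classical

noncomputable section

/-- Division in `ℝ≥0∞` with the convention that the ratio is `0` when the
denominator is `0`. -/
def safeDiv (a b : ℝ≥0∞) : ℝ≥0∞ := if b = 0 then 0 else a / b

variable {d : ℕ} {π : Fin d → Type*} [∀ i, MeasurableSpace (π i)]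

/-- The marginal density on the coordinates in `S`, obtained by integrating a density
out over the coordinates in `[d] \ S` (as a function of the full vector, depending only
on the coordinates in `S`). -/
def marginal (μ : ∀ i, Measure (π i)) (S : Finset (Fin d))
    (f : (∀ i, π i) → ℝ≥0∞) : (∀ i, π i) → ℝ≥0∞ :=
  MeasureTheory.lmarginal μ Sᶜ f

/-- The conditional density of the coordinates in `T1` given the coordinates in `T2`,
with the convention that the ratio is `0` when the denominator is `0`. -/
def condDens (μ : ∀ i, Measure (π i)) (T1 T2 : Finset (Fin d))
    (f : (∀ i, π i) → ℝ≥0∞) (x : ∀ i, π i) : ℝ≥0∞ :=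
  safeDiv (marginal μ (T1 ∪ T2) f x) (marginal μ T2 f x)

/-- `𝕊_d`: the nonempty subsets of `[d]`. -/
abbrev Sd (d : ℕ) := {S : Finset (Fin d) // S.Nonempty}

/-- `𝕋_d`: ordered pairs of disjoint nonempty subsets of `[d]`. -/
abbrev Td (d : ℕ) := {T : Finset (Fin d) × Finset (Fin d) //
  T.1.Nonempty ∧ T.2.Nonempty ∧ Disjoint T.1 T.2}

/-- The individual composite likelihood
`p_{α,β}(x;θ) = ∏_S p_S(x_S;θ)^(α_S/γ) ∏_T p(x_{T←}|x_{T→};θ)^(β_T/γ)`,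
where `f = p(·;θ)` is the joint density. -/
def compLik (μ : ∀ i, Measure (π i)) (α : Sd d → ℝ) (β : Td d → ℝ) (γ : ℝ)
    (f : (∀ i, π i) → ℝ≥0∞) (x : ∀ i, π i) : ℝ≥0∞ :=
  (∏ S : Sd d, marginal μ S.1 f x ^ (α S / γ)) *
  (∏ T : Td d, condDens μ T.1.1 T.1.2 f x ^ (β T / γ))

/-!
Under `P_{θ*}`, the ratio of the composite likelihoods at any `θ` and at `θ*` has expectation at
most one. Hölder's inequality with exponents `α_S / γ` and `β_T / γ` reduces this to a single
factor. For a marginal factor `p_S(·; θ) / p_S(·; θ*)` it is Tonelli's theorem. A conditional factor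
is itself a marginal factor, with `p(·; θ)` replaced by the density whose `T→`-marginal is that of
`p(·; θ*)` and whose conditionals given `x_{T→}` are those of `p(·; θ)`.

Since `θ̃_{i-1}` is non-anticipating, the products of these ratios form a nonnegative
supermartingale started at one, and since `θ̂_s` maximizes the composite likelihood over
`Θ₀ ∋ θ*`, this supermartingale dominates `M_{α,β,s} = 1 / P_s`. Ville's inequality thus bounds the
probability that `P_s ≤ a` for some `s`, an event containing `P̃_N ≤ a` for every random time `N`.
-/

lemma safeDiv_le_div (a b : ℝ≥0∞) : safeDiv a b ≤ a / b := by
  unfold safeDiv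
  split_ifs <;> simp

lemma measurable_safeDiv {E : Type*} [MeasurableSpace E] {u v : E → ℝ≥0∞}
    (hu : Measurable u) (hv : Measurable v) : Measurable fun x => safeDiv (u x) (v x) :=
  Measurable.ite (hv (measurableSet_singleton 0)) measurable_const (hu.div hv)

lemma prod_div_rpow_of_nonneg {ι : Type*} [Fintype ι] {u v : ι → ℝ≥0∞} {w : ι → ℝ}
    (hw : ∀ i, 0 ≤ w i) (hv : ∀ i, v i ≠ ∞) :
    ∏ i, (u i / v i) ^ w i = (∏ i, u i ^ w i) / ∏ i, v i ^ w i := by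
  simp only [ENNReal.div_rpow_of_nonneg _ _ (hw _)]
  exact ENNReal.prod_div_distrib_of_ne_top fun i _ => ENNReal.rpow_ne_top_of_nonneg (hw i) (hv i)

lemma lintegral_prod_rpow_mul_prod_rpow_le_one {E ι κ : Type*} [MeasurableSpace E] {ν : Measure E}
    [Fintype ι] [Fintype κ] {u : ι → E → ℝ≥0∞} {v : κ → E → ℝ≥0∞} {s : ι → ℝ} {t : κ → ℝ}
    (hu : ∀ i, AEMeasurable (u i) ν) (hv : ∀ j, AEMeasurable (v j) ν)
    (hs : ∀ i, 0 ≤ s i) (ht : ∀ j, 0 ≤ t j) (hst : ∑ i, s i + ∑ j, t j = 1)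
    (hu_le : ∀ i, ∫⁻ x, u i x ∂ν ≤ 1) (hv_le : ∀ j, ∫⁻ x, v j x ∂ν ≤ 1) :
    ∫⁻ x, (∏ i, u i x ^ s i) * ∏ j, v j x ^ t j ∂ν ≤ 1 := by
  have holder := ENNReal.lintegral_prod_norm_pow_le Finset.univ
    (f := Sum.elim u v) (p := Sum.elim s t) (μ := ν)
    (by simpa using ⟨hu, hv⟩) (by simpa using hst) (by simpa using ⟨hs, ht⟩)
  simp only [Fintype.prod_sum_type, Sum.elim_inl, Sum.elim_inr] at holder
  exact holder.trans <| mul_le_one'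
    (Finset.prod_le_one' fun i _ => ENNReal.rpow_le_one (hu_le i) (hs i))
    (Finset.prod_le_one' fun j _ => ENNReal.rpow_le_one (hv_le j) (ht j))

section Marginal

variable (μ : ∀ i, Measure (π i)) (S : Finset (Fin d)) {f g h : (∀ i, π i) → ℝ≥0∞}

lemma dependsOn_marginal : DependsOn (marginal μ S f) S :=
  fun _ _ hxy => lmarginal_congr μ f fun i hi => hxy i (by simpa using hi)

variable {S} in
lemma marginal_mul_of_dependsOn (hh : DependsOn h S) (hf : Measurable f) :
    marginal μ S (h * f) = h * marginal μ S f := by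
  ext x
  refine (lintegral_congr fun y => congrArg (· * _) (hh fun i hi => ?_)).trans
    (lintegral_const_mul (h x) (hf.comp measurable_updateFinset))
  simp [Function.updateFinset, Finset.mem_coe.1 hi]

lemma dependsOn_marginal_div_marginal :
    DependsOn (marginal μ S g / marginal μ S f) S :=
  fun _ _ hxy => congrArg₂ (· / ·) (dependsOn_marginal μ S hxy) (dependsOn_marginal μ S hxy)

variable [∀ i, SigmaFinite (μ i)]

lemma measurable_marginal (hf : Measurable f) : Measurable (marginal μ S f) :=
  hf.lmarginal μ

lemma measurable_marginal_uncurry {Θ : Type*} [MeasurableSpace Θ] {p : Θ → (∀ i, π i) → ℝ≥0∞}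
    (hp : Measurable (Function.uncurry p)) :
    Measurable fun z : Θ × (∀ i, π i) => marginal μ S (p z.1) z.2 := by
  refine Measurable.lintegral_prod_right'
    (f := fun q : (Θ × (∀ i, π i)) × (∀ i : (Sᶜ : Finset (Fin d)), π i) =>
      p q.1.1 (Function.updateFinset q.1.2 Sᶜ q.2)) ?_
  exact hp.comp (measurable_fst.fst.prodMk
    (measurable_updateFinset'.comp (measurable_fst.snd.prodMk measurable_snd)))

lemma lmarginal_marginal (hf : Measurable f) (x : ∀ i, π i) :
    lmarginal μ S (marginal μ S f) x = ∫⁻ y, f y ∂Measure.pi μ := by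
  rw [lintegral_eq_lmarginal_univ x, ← Finset.union_compl S,
    lmarginal_union μ f hf disjoint_compl_right, marginal]

lemma lintegral_withDensity_le_of_mul_marginal_le (hf : Measurable f) (hg : Measurable g)
    (hh : Measurable h) (hhS : DependsOn h S) (hle : h * marginal μ S f ≤ marginal μ S g) :
    ∫⁻ x, h x ∂(Measure.pi μ).withDensity f ≤ ∫⁻ x, g x ∂Measure.pi μ := by
  rcases isEmpty_or_nonempty (∀ i, π i) with _ | ⟨⟨x⟩⟩
  · simp
  calc ∫⁻ x, h x ∂(Measure.pi μ).withDensity f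
      = ∫⁻ x, (h * f) x ∂Measure.pi μ := by
        rw [lintegral_withDensity_eq_lintegral_mul _ hf hh, mul_comm]
    _ = lmarginal μ S (marginal μ S (h * f)) x := (lmarginal_marginal μ S (hh.mul hf) x).symm
    _ = lmarginal μ S (h * marginal μ S f) x := by rw [marginal_mul_of_dependsOn μ hhS hf]
    _ ≤ lmarginal μ S (marginal μ S g) x := lmarginal_mono hle x
    _ = ∫⁻ x, g x ∂Measure.pi μ := lmarginal_marginal μ S hg x

lemma lintegral_marginal_div_marginal_le (hf : Measurable f) (hg : Measurable g) :
    ∫⁻ x, marginal μ S g x / marginal μ S f x ∂(Measure.pi μ).withDensity f ≤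
      ∫⁻ x, g x ∂Measure.pi μ :=
  lintegral_withDensity_le_of_mul_marginal_le μ S hf hg
    ((measurable_marginal μ S hg).div (measurable_marginal μ S hf))
    (dependsOn_marginal_div_marginal μ S) fun _ =>
      ENNReal.mul_le_of_le_div le_rfl

lemma ae_marginal_ne_zero_ne_top (hf : Measurable f) (hfin : ∫⁻ x, f x ∂Measure.pi μ ≠ ∞) :
    ∀ᵐ x ∂(Measure.pi μ).withDensity f, marginal μ S f x ≠ 0 ∧ marginal μ S f x ≠ ∞ := by
  -- `h = ∞` on the exceptional set still satisfies `h * f_S ≤ f_S`, so `h` is integrable.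
  let h : (∀ i, π i) → ℝ≥0∞ := fun x => if marginal μ S f x ∈ ({0, ∞} : Set ℝ≥0∞) then ∞ else 0
  have hh : Measurable h :=
    Measurable.ite (measurable_marginal μ S hf (Set.toFinite _).measurableSet)
      measurable_const measurable_const
  have hhS : DependsOn h S := fun x y hxy => by
    simp only [h, dependsOn_marginal μ S hxy]
  have hint : ∫⁻ x, h x ∂(Measure.pi μ).withDensity f ≠ ∞ := by
    refine ne_top_of_le_ne_top hfin
      (lintegral_withDensity_le_of_mul_marginal_le μ S hf hf hh hhS fun x => ?_)
    by_cases hx : marginal μ S f x = 0 <;> by_cases hx' : marginal μ S f x = ∞ <;>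
      simp [h, hx, hx']
  filter_upwards [ae_lt_top hh hint] with x hx
  contrapose! hx
  simp [h, or_iff_not_imp_left.2 hx]

end Marginal

section CompositeLikelihood

variable (μ : ∀ i, Measure (π i)) {α : Sd d → ℝ} {β : Td d → ℝ} {γ : ℝ}
  {f g : (∀ i, π i) → ℝ≥0∞} {x : ∀ i, π i}

lemma condDens_eq_div {A B : Finset (Fin d)} (hB : marginal μ B f x ≠ 0) :
    condDens μ A B f x = marginal μ (A ∪ B) f x / marginal μ B f x := by
  simp [condDens, safeDiv, hB]

lemma condDens_ne_top {A B : Finset (Fin d)} (hB : marginal μ B f x ≠ 0)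
    (hAB : marginal μ (A ∪ B) f x ≠ ∞) : condDens μ A B f x ≠ ∞ := by
  rw [condDens_eq_div μ hB]
  exact ENNReal.div_ne_top hAB hB

lemma compLik_ne_top (hα : ∀ S, 0 ≤ α S) (hβ : ∀ T, 0 ≤ β T) (hγ : 0 ≤ γ)
    (hx : ∀ S, marginal μ S f x ≠ 0 ∧ marginal μ S f x ≠ ∞) : compLik μ α β γ f x ≠ ∞ :=
  ENNReal.mul_ne_top
    (ENNReal.prod_ne_top fun S _ =>
      ENNReal.rpow_ne_top_of_nonneg (div_nonneg (hα S) hγ) (hx _).2)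
    (ENNReal.prod_ne_top fun T _ =>
      ENNReal.rpow_ne_top_of_nonneg (div_nonneg (hβ T) hγ) (condDens_ne_top μ (hx _).1 (hx _).2))

lemma compLik_div_compLik (hα : ∀ S, 0 ≤ α S) (hβ : ∀ T, 0 ≤ β T) (hγ : 0 ≤ γ)
    (hx : ∀ S, marginal μ S f x ≠ 0 ∧ marginal μ S f x ≠ ∞) :
    compLik μ α β γ g x / compLik μ α β γ f x =
      (∏ S : Sd d, (marginal μ S.1 g x / marginal μ S.1 f x) ^ (α S / γ)) *
        ∏ T : Td d, (condDens μ T.1.1 T.1.2 g x / condDens μ T.1.1 T.1.2 f x) ^ (β T / γ) := by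
  have hα' : ∀ S, 0 ≤ α S / γ := fun S => div_nonneg (hα S) hγ
  have hβ' : ∀ T, 0 ≤ β T / γ := fun T => div_nonneg (hβ T) hγ
  have hcond : ∀ T : Td d, condDens μ T.1.1 T.1.2 f x ≠ ∞ :=
    fun T => condDens_ne_top μ (hx _).1 (hx _).2
  rw [prod_div_rpow_of_nonneg hα' fun S => (hx S.1).2, prod_div_rpow_of_nonneg hβ' hcond]
  exact ENNReal.mul_div_mul_comm
    (.inr (ENNReal.prod_ne_top fun T _ => ENNReal.rpow_ne_top_of_nonneg (hβ' T) (hcond T)))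
    (.inl (ENNReal.prod_ne_top fun S _ => ENNReal.rpow_ne_top_of_nonneg (hα' S) (hx S.1).2))

variable [∀ i, SigmaFinite (μ i)]

lemma measurable_condDens_uncurry (A B : Finset (Fin d)) {Θ : Type*} [MeasurableSpace Θ]
    {p : Θ → (∀ i, π i) → ℝ≥0∞} (hp : Measurable (Function.uncurry p)) :
    Measurable fun z : Θ × (∀ i, π i) => condDens μ A B (p z.1) z.2 :=
  measurable_safeDiv (measurable_marginal_uncurry μ _ hp) (measurable_marginal_uncurry μ _ hp)

lemma measurable_condDens (A B : Finset (Fin d)) (hf : Measurable f) :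
    Measurable (condDens μ A B f) :=
  measurable_safeDiv (measurable_marginal μ _ hf) (measurable_marginal μ _ hf)

variable (α β γ) in
lemma measurable_compLik_uncurry {Θ : Type*} [MeasurableSpace Θ] {p : Θ → (∀ i, π i) → ℝ≥0∞}
    (hp : Measurable (Function.uncurry p)) :
    Measurable fun z : Θ × (∀ i, π i) => compLik μ α β γ (p z.1) z.2 :=
  (Finset.measurable_prod _ fun _ _ => (measurable_marginal_uncurry μ _ hp).pow_const _).mul
    (Finset.measurable_prod _ fun _ _ => (measurable_condDens_uncurry μ _ _ hp).pow_const _)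

lemma lintegral_condDens_div_condDens_le (A B : Finset (Fin d)) (hf : Measurable f)
    (hg : Measurable g) (hfin : ∫⁻ x, f x ∂Measure.pi μ ≠ ∞) :
    ∫⁻ x, condDens μ A B g x / condDens μ A B f x ∂(Measure.pi μ).withDensity f ≤
      ∫⁻ x, f x ∂Measure.pi μ := by
  -- `q` has the `B`-marginal of `f` and the conditionals given `B` of `g`, so its
  -- `(A ∪ B)`-marginal ratio against `f` is the ratio of conditionals.
  let w : (∀ i, π i) → ℝ≥0∞ := marginal μ B f / marginal μ B g
  let q : (∀ i, π i) → ℝ≥0∞ := w * g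
  have hw_meas : Measurable w := (measurable_marginal μ B hf).div (measurable_marginal μ B hg)
  have hw : DependsOn w (A ∪ B : Finset (Fin d)) :=
    (dependsOn_marginal_div_marginal μ B).mono (by simp)
  have hratio : ∀ᵐ x ∂(Measure.pi μ).withDensity f, condDens μ A B g x / condDens μ A B f x ≤
      marginal μ (A ∪ B) q x / marginal μ (A ∪ B) f x := by
    filter_upwards [ae_marginal_ne_zero_ne_top μ B hf hfin] with x ⟨hB0, hBtop⟩
    calc condDens μ A B g x / condDens μ A B f x
        ≤ marginal μ (A ∪ B) g x / marginal μ B g x /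
            (marginal μ (A ∪ B) f x / marginal μ B f x) := by
          rw [condDens_eq_div μ hB0]
          exact ENNReal.div_le_div_right (safeDiv_le_div _ _) _
      _ = w x * marginal μ (A ∪ B) g x / marginal μ (A ∪ B) f x := by
          rw [div_eq_mul_inv, ENNReal.inv_div (.inl hBtop) (.inl hB0)]
          change _ = marginal μ B f x / marginal μ B g x * _ / _
          simp only [div_eq_mul_inv]
          ring
      _ = marginal μ (A ∪ B) q x / marginal μ (A ∪ B) f x := by
          rw [marginal_mul_of_dependsOn μ hw hg, Pi.mul_apply]
  calc ∫⁻ x, condDens μ A B g x / condDens μ A B f x ∂(Measure.pi μ).withDensity f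
      ≤ ∫⁻ x, marginal μ (A ∪ B) q x / marginal μ (A ∪ B) f x ∂(Measure.pi μ).withDensity f :=
        lintegral_mono_ae hratio
    _ ≤ ∫⁻ x, q x ∂Measure.pi μ := lintegral_marginal_div_marginal_le μ (A ∪ B) hf (hw_meas.mul hg)
    _ = ∫⁻ x, w x ∂(Measure.pi μ).withDensity g := by
        rw [lintegral_withDensity_eq_lintegral_mul _ hg hw_meas, mul_comm]
    _ ≤ ∫⁻ x, f x ∂Measure.pi μ := lintegral_marginal_div_marginal_le μ B hg hf

theorem lintegral_compLik_div_compLik_le_one (hα : ∀ S, 0 ≤ α S) (hβ : ∀ T, 0 ≤ β T)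
    (hγ : γ = ∑ S, α S + ∑ T, β T) (hγpos : 0 < γ) (hf : Measurable f) (hg : Measurable g)
    (hf_le : ∫⁻ x, f x ∂Measure.pi μ ≤ 1) (hg_le : ∫⁻ x, g x ∂Measure.pi μ ≤ 1) :
    ∫⁻ x, compLik μ α β γ g x / compLik μ α β γ f x ∂(Measure.pi μ).withDensity f ≤ 1 := by
  have hfin : ∫⁻ x, f x ∂Measure.pi μ ≠ ∞ := ne_top_of_le_ne_top one_ne_top hf_le
  have hgood := ae_all_iff.2 fun S => ae_marginal_ne_zero_ne_top μ S hf hfin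
  rw [lintegral_congr_ae (hgood.mono fun x hx => compLik_div_compLik μ hα hβ hγpos.le hx)]
  refine lintegral_prod_rpow_mul_prod_rpow_le_one
    (fun S => ((measurable_marginal μ _ hg).div (measurable_marginal μ _ hf)).aemeasurable)
    (fun T => ((measurable_condDens μ _ _ hg).div (measurable_condDens μ _ _ hf)).aemeasurable)
    (fun S => div_nonneg (hα S) hγpos.le) (fun T => div_nonneg (hβ T) hγpos.le) ?_
    (fun S => (lintegral_marginal_div_marginal_le μ _ hf hg).trans hg_le)
    (fun T => (lintegral_condDens_div_condDens_le μ _ _ hf hg hfin).trans hf_le)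
  rw [← Finset.sum_div, ← Finset.sum_div, ← add_div, ← hγ, div_self hγpos.ne']

end CompositeLikelihood

section Ville

variable {Ω : Type*} {m mΩ : MeasurableSpace Ω} {P : Measure Ω}

lemma mul_measure_union_add_setLIntegral_compl_le {B : Set Ω} {u : Ω → ℝ≥0∞}
    (hu : Measurable u) (hB : MeasurableSet B) (c : ℝ≥0∞) :
    c * P (B ∪ {ω | c ≤ u ω}) + ∫⁻ ω in (B ∪ {ω | c ≤ u ω})ᶜ, u ω ∂P ≤
      c * P B + ∫⁻ ω in Bᶜ, u ω ∂P := by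
  have hA : MeasurableSet {ω | c ≤ u ω} := hu measurableSet_Ici
  have markov : c * P (Bᶜ ∩ {ω | c ≤ u ω}) ≤ ∫⁻ ω in Bᶜ ∩ {ω | c ≤ u ω}, u ω ∂P := by
    rw [← setLIntegral_const]
    exact setLIntegral_mono' (hB.compl.inter hA) fun _ hω => hω.2
  calc c * P (B ∪ {ω | c ≤ u ω}) + ∫⁻ ω in (B ∪ {ω | c ≤ u ω})ᶜ, u ω ∂P
      = c * P B + (c * P (Bᶜ ∩ {ω | c ≤ u ω}) + ∫⁻ ω in Bᶜ \ {ω | c ≤ u ω}, u ω ∂P) := by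
        rw [← measure_add_sdiff hB.nullMeasurableSet, mul_add, add_assoc, Set.compl_union,
          Set.sdiff_eq, Set.sdiff_eq, Set.inter_comm _ Bᶜ]
    _ ≤ c * P B + ∫⁻ ω in Bᶜ, u ω ∂P := by
        rw [← lintegral_inter_add_sdiff u Bᶜ hA]
        gcongr

/-- **Ville's maximal inequality**. The supermartingale property is stated through integrals over
`F n`-measurable sets, so that `M` may take the value `∞`. -/
theorem mul_measure_exists_le_le_lintegral (F : Filtration ℕ mΩ) {M : ℕ → Ω → ℝ≥0∞}
    (hM : ∀ n, Measurable[F n] (M n))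
    (hstep : ∀ n s, MeasurableSet[F n] s → ∫⁻ ω in s, M (n + 1) ω ∂P ≤ ∫⁻ ω in s, M n ω ∂P)
    (c : ℝ≥0∞) : c * P {ω | ∃ n, c ≤ M n ω} ≤ ∫⁻ ω, M 0 ω ∂P := by
  let hit : ℕ → Set Ω := Set.accumulate fun k => {ω | c ≤ M k ω}
  have hit_meas : ∀ n, MeasurableSet[F n] (hit n) := fun n =>
    MeasurableSet.biUnion (Set.to_countable _) fun k hk => F.mono hk _ (hM k measurableSet_Ici)
  have hM' : ∀ n, Measurable (M n) := fun n => (hM n).mono (F.le n) le_rfl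
  have budget : ∀ n, c * P (hit n) + ∫⁻ ω in (hit n)ᶜ, M n ω ∂P ≤ ∫⁻ ω, M 0 ω ∂P := by
    intro n
    induction n with
    | zero =>
      simpa [hit] using
        mul_measure_union_add_setLIntegral_compl_le (P := P) (hM' 0) MeasurableSet.empty c
    | succ n ih =>
      calc c * P (hit (n + 1)) + ∫⁻ ω in (hit (n + 1))ᶜ, M (n + 1) ω ∂P
          ≤ c * P (hit n) + ∫⁻ ω in (hit n)ᶜ, M (n + 1) ω ∂P := by
            simp only [hit, Set.accumulate_succ]
            exact mul_measure_union_add_setLIntegral_compl_le (hM' _) (F.le n _ (hit_meas n)) c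
        _ ≤ c * P (hit n) + ∫⁻ ω in (hit n)ᶜ, M n ω ∂P :=
            add_le_add le_rfl (hstep n _ (hit_meas n).compl)
        _ ≤ ∫⁻ ω, M 0 ω ∂P := ih
  rw [Set.ofPred_exists, measure_iUnion_eq_iSup_accumulate, ENNReal.mul_iSup]
  exact iSup_le fun n => le_self_add.trans (budget n)

lemma lintegral_prodMk_of_indepFun [IsFiniteMeasure P] {E E' : Type*} [MeasurableSpace E]
    [MeasurableSpace E'] {Y : Ω → E'} {X : Ω → E} (hY : Measurable Y) (hX : Measurable X)
    (hYX : ProbabilityTheory.IndepFun Y X P) {f : E' × E → ℝ≥0∞} (hf : Measurable f) :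
    ∫⁻ ω, f (Y ω, X ω) ∂P = ∫⁻ ω, ∫⁻ x, f (Y ω, x) ∂P.map X ∂P := by
  calc ∫⁻ ω, f (Y ω, X ω) ∂P
      = ∫⁻ z, f z ∂P.map fun ω => (Y ω, X ω) := (lintegral_map hf (hY.prodMk hX)).symm
    _ = ∫⁻ y, ∫⁻ x, f (y, x) ∂P.map X ∂P.map Y := by
      rw [hYX.map_prod_eq_prod_map_map hY.aemeasurable hX.aemeasurable,
        lintegral_prod _ hf.aemeasurable]
    _ = ∫⁻ ω, ∫⁻ x, f (Y ω, x) ∂P.map X ∂P := lintegral_map hf.lintegral_prod_right' hY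

lemma lintegral_mul_le_of_indep [IsFiniteMeasure P] {E : Type*} [MeasurableSpace E]
    (hm : m ≤ mΩ) {X : Ω → E} (hX : Measurable X)
    (hindep : ProbabilityTheory.Indep m (MeasurableSpace.comap X inferInstance) P)
    {W : Ω → ℝ≥0∞} (hW : Measurable[m] W)
    {e : Ω × E → ℝ≥0∞} (he : Measurable[m.prod inferInstance] e)
    (he_le : ∀ ω, ∫⁻ x, e (ω, x) ∂P.map X ≤ 1) :
    ∫⁻ ω, W ω * e (ω, X ω) ∂P ≤ ∫⁻ ω, W ω ∂P := by
  have hid : @ProbabilityTheory.IndepFun Ω Ω E _ m _ id X P :=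
    (ProbabilityTheory.IndepFun_iff_Indep (mβ := m) _ _ _).2 (by rwa [MeasurableSpace.comap_id])
  calc ∫⁻ ω, W ω * e (ω, X ω) ∂P
      = ∫⁻ ω, ∫⁻ x, W ω * e (ω, x) ∂P.map X ∂P :=
        @lintegral_prodMk_of_indepFun Ω _ P _ E Ω _ m id X (measurable_id'' hm) hX hid
          (fun z => W z.1 * e z) ((hW.comp measurable_fst).mul he)
    _ = ∫⁻ ω, W ω * ∫⁻ x, e (ω, x) ∂P.map X ∂P :=
        lintegral_congr fun ω => lintegral_const_mul _ (he.comp measurable_prodMk_left)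
    _ ≤ ∫⁻ ω, W ω ∂P := lintegral_mono fun ω => mul_le_of_le_one_right' (he_le ω)

theorem measure_exists_le_prod_le_inv [IsProbabilityMeasure P] {E : Type*} [MeasurableSpace E]
    (F : Filtration ℕ mΩ) {X : ℕ → Ω → E} (hXF : ∀ n, Measurable[F (n + 1)] (X n))
    (hindep : ∀ n, ProbabilityTheory.Indep (F n) (MeasurableSpace.comap (X n) inferInstance) P)
    {e : ℕ → Ω × E → ℝ≥0∞} (he : ∀ n, Measurable[(F n).prod inferInstance] (e n))
    (he_le : ∀ n ω, ∫⁻ x, e n (ω, x) ∂P.map (X n) ≤ 1) (c : ℝ≥0∞) :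
    P {ω | ∃ n, c ≤ ∏ i ∈ Finset.range n, e i (ω, X i ω)} ≤ c⁻¹ := by
  let M : ℕ → Ω → ℝ≥0∞ := fun n ω => ∏ i ∈ Finset.range n, e i (ω, X i ω)
  have hfactor : ∀ n, Measurable[F (n + 1)] fun ω => e n (ω, X n ω) := fun n =>
    (he n).comp (Measurable.prodMk (m := F (n + 1)) (measurable_id'' (F.mono n.le_succ)) (hXF n))
  have hM : ∀ n, Measurable[F n] (M n) := fun n =>
    Finset.measurable_prod _ fun i hi =>
      (hfactor i).mono (F.mono (Finset.mem_range.1 hi)) le_rfl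
  have hstep : ∀ n s, MeasurableSet[F n] s →
      ∫⁻ ω in s, M (n + 1) ω ∂P ≤ ∫⁻ ω in s, M n ω ∂P := by
    intro n s hs
    rw [← lintegral_indicator (F.le n s hs), ← lintegral_indicator (F.le n s hs)]
    simp only [M, Finset.prod_range_succ, Set.indicator_mul_left]
    exact lintegral_mul_le_of_indep (F.le n) ((hXF n).mono (F.le (n + 1)) le_rfl) (hindep n)
      ((hM n).indicator hs) (he n) (he_le n)
  rw [ENNReal.le_inv_iff_mul_le, mul_comm]
  simpa [M] using mul_measure_exists_le_le_lintegral F hM hstep c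

end Ville

section StrictPast

variable {Ω E : Type*} {mΩ : MeasurableSpace Ω} [MeasurableSpace E] {P : Measure Ω}
  {X : ℕ → Ω → E} (hX : ∀ i, Measurable (X i))

variable (X) in
/-- The filtration whose `n`-th σ-algebra is generated by `X 0, …, X (n - 1)`; in contrast to
`MeasureTheory.Filtration.natural`, the observation `X n` is excluded. -/
def strictPast : Filtration ℕ mΩ where
  seq n := MeasurableSpace.comap (fun ω (j : Fin n) => X j ω) inferInstance
  mono' a b hab := by
    let restrict : (Fin b → E) → Fin a → E := fun v j => v (Fin.castLE hab j)
    change MeasurableSpace.comap (restrict ∘ fun ω (j : Fin b) => X j ω) _ ≤ _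
    rw [← MeasurableSpace.comap_comp]
    exact MeasurableSpace.comap_mono (Measurable.comap_le (by fun_prop))
  le' _ := Measurable.comap_le <| measurable_pi_lambda _ fun j => hX j

lemma measurable_strictPast_succ (n : ℕ) : Measurable[strictPast X hX (n + 1)] (X n) :=
  (measurable_pi_apply (Fin.last n)).comp (comap_measurable fun ω (j : Fin (n + 1)) => X j ω)

lemma indep_strictPast (hind : ProbabilityTheory.iIndepFun X P) (n : ℕ) :
    ProbabilityTheory.Indep (strictPast X hX n) (MeasurableSpace.comap (X n) inferInstance) P :=
  (ProbabilityTheory.IndepFun_iff_Indep _ _ _).1 <|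
    (hind.indepFun_finset (Finset.range n) {n} (by simp) hX).comp
      (φ := fun v (j : Fin n) => v ⟨j, by simp⟩) (ψ := fun v => v ⟨n, by simp⟩)
      (measurable_pi_lambda _ fun _ => measurable_pi_apply _) (measurable_pi_apply _)

end StrictPast

section PValue

variable {μ : ∀ i, Measure (π i)} {α : Sd d → ℝ} {β : Td d → ℝ} {γ : ℝ}

lemma safeDiv_prod_compLik_le_prod_div {ι : Type*} {s : Finset ι} {f : (∀ i, π i) → ℝ≥0∞}
    {g : ι → (∀ i, π i) → ℝ≥0∞} {x : ι → ∀ i, π i} {b : ℝ≥0∞}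
    (hα : ∀ S, 0 ≤ α S) (hβ : ∀ T, 0 ≤ β T) (hγ : 0 ≤ γ)
    (hx : ∀ i ∈ s, ∀ S, marginal μ S f (x i) ≠ 0 ∧ marginal μ S f (x i) ≠ ∞)
    (hb : ∏ i ∈ s, compLik μ α β γ f (x i) ≤ b) :
    safeDiv (∏ i ∈ s, compLik μ α β γ (g i) (x i)) b ≤
      ∏ i ∈ s, compLik μ α β γ (g i) (x i) / compLik μ α β γ f (x i) :=
  calc safeDiv (∏ i ∈ s, compLik μ α β γ (g i) (x i)) b
      ≤ (∏ i ∈ s, compLik μ α β γ (g i) (x i)) / b := safeDiv_le_div _ _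
    _ ≤ (∏ i ∈ s, compLik μ α β γ (g i) (x i)) / ∏ i ∈ s, compLik μ α β γ f (x i) :=
        ENNReal.div_le_div_left hb _
    _ = ∏ i ∈ s, compLik μ α β γ (g i) (x i) / compLik μ α β γ f (x i) :=
        (ENNReal.prod_div_distrib_of_ne_top fun i hi => compLik_ne_top μ hα hβ hγ (hx i hi)).symm

theorem running_inf_p_value_valid_general [∀ i, SigmaFinite (μ i)] {Θ : Type*} [MeasurableSpace Θ]
    {p : Θ → (∀ i, π i) → ℝ≥0∞} (hp_meas : Measurable (Function.uncurry p))
    (hp_le : ∀ θ, ∫⁻ x, p θ x ∂Measure.pi μ ≤ 1)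
    (hα : ∀ S, 0 ≤ α S) (hβ : ∀ T, 0 ≤ β T) (hγ : γ = ∑ S, α S + ∑ T, β T) (hγpos : 0 < γ)
    {Ω : Type*} {mΩ : MeasurableSpace Ω} {P : Measure Ω} [IsProbabilityMeasure P]
    {θstar : Θ} {X : ℕ → Ω → ∀ i, π i}
    (hlaw : ∀ i, P.map (X i) = (Measure.pi μ).withDensity (p θstar))
    (F : Filtration ℕ mΩ) (hXF : ∀ i, Measurable[F (i + 1)] (X i))
    (hindep : ∀ i, ProbabilityTheory.Indep (F i) (MeasurableSpace.comap (X i) inferInstance) P)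
    {θtilde : ℕ → Ω → Θ} (hθtilde : ∀ i, Measurable[F i] (θtilde i))
    {Θ0 : Set Θ} (hθstar : θstar ∈ Θ0) {θhat : ℕ → Ω → Θ}
    (hθhat_max : ∀ n ω, ∀ θ ∈ Θ0, ∏ i ∈ Finset.range n, compLik μ α β γ (p θ) (X i ω) ≤
      ∏ i ∈ Finset.range n, compLik μ α β γ (p (θhat n ω)) (X i ω))
    (a : ℝ≥0∞) :
    P {ω | ∃ n, (safeDiv
        (∏ i ∈ Finset.range n, compLik μ α β γ (p (θtilde i ω)) (X i ω))
        (∏ i ∈ Finset.range n, compLik μ α β γ (p (θhat n ω)) (X i ω)))⁻¹ ≤ a} ≤ a := by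
  let e : ℕ → Ω × (∀ i, π i) → ℝ≥0∞ := fun i z =>
    compLik μ α β γ (p (θtilde i z.1)) z.2 / compLik μ α β γ (p θstar) z.2
  have hp : ∀ θ, Measurable (p θ) := fun θ => hp_meas.comp measurable_prodMk_left
  have hlik := measurable_compLik_uncurry μ α β γ hp_meas
  have he : ∀ i, Measurable[(F i).prod inferInstance] (e i) := fun i =>
    (hlik.comp (((hθtilde i).comp measurable_fst).prodMk measurable_snd)).div
      (hlik.comp (measurable_const.prodMk measurable_snd))
  have he_le : ∀ i ω, ∫⁻ x, e i (ω, x) ∂P.map (X i) ≤ 1 := fun i ω => by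
    simpa only [hlaw i, e] using lintegral_compLik_div_compLik_le_one μ hα hβ hγ hγpos (hp θstar)
      (hp (θtilde i ω)) (hp_le _) (hp_le _)
  have hgood : ∀ᵐ ω ∂P, ∀ i S,
      marginal μ S (p θstar) (X i ω) ≠ 0 ∧ marginal μ S (p θstar) (X i ω) ≠ ∞ := by
    refine ae_all_iff.2 fun i => ?_
    have hlawi := ae_all_iff.2 fun S => ae_marginal_ne_zero_ne_top μ S (hp θstar)
      (ne_top_of_le_ne_top one_ne_top (hp_le θstar))
    rw [← hlaw i] at hlawi
    exact ae_of_ae_map ((hXF i).mono (F.le (i + 1)) le_rfl).aemeasurable hlawi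
  calc P {ω | ∃ n, (safeDiv
        (∏ i ∈ Finset.range n, compLik μ α β γ (p (θtilde i ω)) (X i ω))
        (∏ i ∈ Finset.range n, compLik μ α β γ (p (θhat n ω)) (X i ω)))⁻¹ ≤ a}
      ≤ P {ω | ∃ n, a⁻¹ ≤ ∏ i ∈ Finset.range n, e i (ω, X i ω)} := by
        refine measure_mono_ae ?_
        filter_upwards [hgood] with ω hω ⟨n, hn⟩
        exact ⟨n, (ENNReal.inv_le_iff_inv_le.1 hn).trans <|
          safeDiv_prod_compLik_le_prod_div hα hβ hγpos.le (fun i _ => hω i)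
            (hθhat_max n ω θstar hθstar)⟩
    _ ≤ a := (measure_exists_le_prod_le_inv F hXF hindep he he_le a⁻¹).trans_eq (inv_inv a)

end PValue

/-- The running infimum p-value is valid at arbitrary random times:
for any `ℕ`-valued random variable `N` (not necessarily a stopping time) and every
`a ∈ [0,1]`, `sup_{θ*∈Θ₀} Pr_{θ*}(P̃_N ≤ a) ≤ a`, where `P̃_n = min_{s ≤ n} P_s` and
`P_s = 1/M_{α,β,s}` (equal to `+∞` when `M_{α,β,s} = 0`). -/
theorem running_inf_p_value_valid
    {d : ℕ} (hd : 1 ≤ d)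
    {π : Fin d → Type*} [∀ i, MeasurableSpace (π i)]
    (μ : ∀ i, Measure (π i)) [∀ i, SigmaFinite (μ i)]
    {Θ : Type*} [MeasurableSpace Θ]
    (p : Θ → (∀ i, π i) → ℝ≥0∞)
    (hp_meas : Measurable (Function.uncurry p))
    (hp_prob : ∀ θ : Θ, ∫⁻ x, p θ x ∂(Measure.pi μ) = 1)
    (α : Sd d → ℝ) (β : Td d → ℝ)
    (hα : ∀ S, 0 ≤ α S) (hβ : ∀ T, 0 ≤ β T)
    (γ : ℝ) (hγ : γ = ∑ S, α S + ∑ T, β T) (hγpos : 0 < γ)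
    {Ω : Type*} [MeasurableSpace Ω]
    (Pr : Measure Ω) [IsProbabilityMeasure Pr]
    (θstar : Θ)
    -- `X 0, X 1, X 2, …` is the i.i.d. sequence `X_1, X_2, …` (0-indexed),
    -- each observation having density `p(·;θ*)` with respect to `μ`
    (X : ℕ → Ω → (∀ i, π i))
    (hX : ∀ i, Measurable (X i))
    (hiid : ProbabilityTheory.iIndepFun X Pr)
    (hlaw : ∀ i, Measure.map (X i) Pr = (Measure.pi μ).withDensity (p θstar))
    -- the natural filtration `F n = σ(X_1,…,X_n)` (so `F 0` is trivial)
    (F : ℕ → MeasurableSpace Ω)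
    (hF : ∀ n, F n = MeasurableSpace.comap (fun ω => fun j : Fin n => X j ω)
      (inferInstance : MeasurableSpace (Fin n → ∀ i, π i)))
    -- non-anticipating estimators: `θtilde i` is the estimator `θ̃_i`
    -- built from `X_1,…,X_i`, i.e. measurable with respect to `F i`
    (θtilde : ℕ → Ω → Θ)
    (hθtilde : ∀ i, @Measurable Ω Θ (F i) _ (θtilde i))
    -- null hypothesis parameter space and maximum composite likelihood
    -- estimators over `Θ₀`: `θhat n` is `F n`-measurable, `Θ₀`-valued and
    -- maximizes the composite likelihood of the first `n` observations over `Θ₀`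
    (Θ0 : Set Θ)
    (θhat : ℕ → Ω → Θ)
    (hθhat_meas : ∀ n, @Measurable Ω Θ (F n) _ (θhat n))
    (hθhat_mem : ∀ n ω, θhat n ω ∈ Θ0)
    (hθhat_max : ∀ n ω, ∀ θ ∈ Θ0,
      (∏ i ∈ Finset.range n, compLik μ α β γ (p θ) (X i ω))
        ≤ ∏ i ∈ Finset.range n, compLik μ α β γ (p (θhat n ω)) (X i ω))
    -- the DGP parameter lies in the null hypothesis set
    (hθstar : θstar ∈ Θ0)
    (N : Ω → ℕ) (hN : Measurable N)
    (a : ℝ) (ha0 : 0 ≤ a) (ha1 : a ≤ 1) :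
    Pr {ω | (Finset.range (N ω + 1)).inf (fun s => (safeDiv
        (∏ i ∈ Finset.range s, compLik μ α β γ (p (θtilde i ω)) (X i ω))
        (∏ i ∈ Finset.range s, compLik μ α β γ (p (θhat s ω)) (X i ω)))⁻¹)
      ≤ ENNReal.ofReal a} ≤ ENNReal.ofReal a := by
  obtain rfl := funext hF
  exact (measure_mono fun ω hω =>
    let ⟨s, _, hs⟩ := (Finset.inf_le_iff ENNReal.ofReal_lt_top).1 hω
    ⟨s, hs⟩).trans <|
    running_inf_p_value_valid_general hp_meas (fun θ => (hp_prob θ).le) hα hβ hγ hγpos hlaw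
      (strictPast X hX) (measurable_strictPast_succ hX) (indep_strictPast hX hiid)
      hθtilde hθstar hθhat_max (ENNReal.ofReal a)
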